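/- Let 1 < p < ∞ and w ∈ A_p, and let M be the Hardy–Littlewood maximal operator. Then there exists a constant C > 0, independent of f, a, and r, such that for every a ∈ ℝⁿ, r > 0, and f ∈ L^{p,w}_loc: ‖Mf‖_{L^{p,w}(B(a,r))} ≤ C·w(B(a,r))^{1/p}·∫_r^∞ w(B(a,s))^{-1/p} ‖f‖_{L^{p,w}(B(a,s))} ds/s. -/

import Mathlib

open MeasureTheory Metric Set
open scoped ENNReal

noncomputable section

/-- The weighted measure of a set: `w(E) = ∫_E w(x) dx`, valued in `ℝ≥0∞`. -/
def wSet {n : ℕ} (w : EuclideanSpace ℝ (Fin n) → ℝ)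
    (E : Set (EuclideanSpace ℝ (Fin n))) : ℝ≥0∞ :=
  ∫⁻ x in E, ENNReal.ofReal (w x)

/-- The weighted Lebesgue norm `‖f‖_{L^{p,w}(Ω)} = (∫_Ω |f(x)|^p w(x) dx)^{1/p}`. -/
def wLp {n : ℕ} (p : ℝ) (w f : EuclideanSpace ℝ (Fin n) → ℝ)
    (Ω : Set (EuclideanSpace ℝ (Fin n))) : ℝ≥0∞ :=
  (∫⁻ x in Ω, ENNReal.ofReal |f x| ^ p * ENNReal.ofReal (w x)) ^ (1 / p)

/-- The weighted Lebesgue norm for an `ℝ≥0∞`-valued function. -/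
def wLpE {n : ℕ} (p : ℝ) (w : EuclideanSpace ℝ (Fin n) → ℝ)
    (g : EuclideanSpace ℝ (Fin n) → ℝ≥0∞) (Ω : Set (EuclideanSpace ℝ (Fin n))) : ℝ≥0∞ :=
  (∫⁻ x in Ω, g x ^ p * ENNReal.ofReal (w x)) ^ (1 / p)

/-- The weak weighted Lebesgue norm `‖f‖_{WL^{p,w}(Ω)} = sup_{γ>0} γ·w({x ∈ Ω : |f(x)| > γ})^{1/p}`. -/
def wWeakLp {n : ℕ} (p : ℝ) (w f : EuclideanSpace ℝ (Fin n) → ℝ)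
    (Ω : Set (EuclideanSpace ℝ (Fin n))) : ℝ≥0∞ :=
  ⨆ γ : Set.Ioi (0 : ℝ),
    ENNReal.ofReal γ.1 * (wSet w {x | x ∈ Ω ∧ γ.1 < |f x|}) ^ (1 / p)

/-- The weak weighted Lebesgue norm for an `ℝ≥0∞`-valued function. -/
def wWeakLpE {n : ℕ} (p : ℝ) (w : EuclideanSpace ℝ (Fin n) → ℝ)
    (g : EuclideanSpace ℝ (Fin n) → ℝ≥0∞) (Ω : Set (EuclideanSpace ℝ (Fin n))) : ℝ≥0∞ :=
  ⨆ γ : Set.Ioi (0 : ℝ),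
    ENNReal.ofReal γ.1 * (wSet w {x | x ∈ Ω ∧ ENNReal.ofReal γ.1 < g x}) ^ (1 / p)

/-- `f ∈ L^{p,w}_loc`: `f` is measurable and `‖f‖_{L^{p,w}(B)} < ∞` on every ball. -/
def MemLocWLp {n : ℕ} (p : ℝ) (w f : EuclideanSpace ℝ (Fin n) → ℝ) : Prop :=
  Measurable f ∧ ∀ (a : EuclideanSpace ℝ (Fin n)) (r : ℝ), 0 < r → wLp p w f (ball a r) < ⊤

/-- A weight: nonnegative, measurable, locally integrable, positive a.e. -/
def IsWeight {n : ℕ} (w : EuclideanSpace ℝ (Fin n) → ℝ) : Prop :=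
  Measurable w ∧ (∀ x, 0 ≤ w x) ∧ LocallyIntegrable w volume ∧ ∀ᵐ x ∂volume, 0 < w x

/-- The Muckenhoupt class `A_p` for `1 < p`. -/
def MuckAp {n : ℕ} (p : ℝ) (w : EuclideanSpace ℝ (Fin n) → ℝ) : Prop :=
  ∃ C : ℝ, 0 < C ∧ ∀ (a : EuclideanSpace ℝ (Fin n)) (r : ℝ), 0 < r →
    ((volume (ball a r))⁻¹ * ∫⁻ x in ball a r, ENNReal.ofReal (w x)) *
      ((volume (ball a r))⁻¹ *
        ∫⁻ x in ball a r, ENNReal.ofReal (w x ^ (-(1 / (p - 1))))) ^ (p - 1) ≤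
      ENNReal.ofReal C

/-- The Muckenhoupt class `A_1`. -/
def MuckA1 {n : ℕ} (w : EuclideanSpace ℝ (Fin n) → ℝ) : Prop :=
  ∃ C : ℝ, 0 < C ∧ ∀ (a : EuclideanSpace ℝ (Fin n)) (r : ℝ), 0 < r →
    ((volume (ball a r))⁻¹ * ∫⁻ x in ball a r, ENNReal.ofReal (w x)) *
      essSup (fun x => ENNReal.ofReal (w x)⁻¹) (volume.restrict (ball a r)) ≤
      ENNReal.ofReal C

/-- The class `A_{p,q}` for `1 < p`, where `p'` is the conjugate exponent of `p`. -/
def MuckApq {n : ℕ} (p q p' : ℝ) (w : EuclideanSpace ℝ (Fin n) → ℝ) : Prop :=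
  ∃ C : ℝ, 0 < C ∧ ∀ (a : EuclideanSpace ℝ (Fin n)) (r : ℝ), 0 < r →
    ((volume (ball a r))⁻¹ * ∫⁻ x in ball a r, ENNReal.ofReal (w x ^ q)) ^ (1 / q) *
      ((volume (ball a r))⁻¹ * ∫⁻ x in ball a r, ENNReal.ofReal (w x ^ (-p'))) ^ (1 / p') ≤
      ENNReal.ofReal C

/-- The class `A_{1,q}`. -/
def MuckA1q {n : ℕ} (q : ℝ) (w : EuclideanSpace ℝ (Fin n) → ℝ) : Prop :=
  ∃ C : ℝ, 0 < C ∧ ∀ (a : EuclideanSpace ℝ (Fin n)) (r : ℝ), 0 < r →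
    ((volume (ball a r))⁻¹ * ∫⁻ x in ball a r, ENNReal.ofReal (w x ^ q)) ^ (1 / q) *
      essSup (fun x => ENNReal.ofReal (w x)⁻¹) (volume.restrict (ball a r)) ≤
      ENNReal.ofReal C

/-- The Hardy–Littlewood maximal operator. -/
def HLMax {n : ℕ} (f : EuclideanSpace ℝ (Fin n) → ℝ)
    (x : EuclideanSpace ℝ (Fin n)) : ℝ≥0∞ :=
  ⨆ r : Set.Ioi (0 : ℝ), (volume (ball x r.1))⁻¹ * ∫⁻ y in ball x r.1, ENNReal.ofReal |f y|

/-- The fractional integral operator `I_α` (applied to `|f|`, valued in `ℝ≥0∞`). -/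
def fracIntE {n : ℕ} (α : ℝ) (f : EuclideanSpace ℝ (Fin n) → ℝ)
    (x : EuclideanSpace ℝ (Fin n)) : ℝ≥0∞ :=
  ∫⁻ y, ENNReal.ofReal |f y| / ENNReal.ofReal (dist x y ^ ((n : ℝ) - α))

/-- The fractional maximal operator `M_α`. -/
def fracMax {n : ℕ} (α : ℝ) (f : EuclideanSpace ℝ (Fin n) → ℝ)
    (x : EuclideanSpace ℝ (Fin n)) : ℝ≥0∞ :=
  ⨆ r : Set.Ioi (0 : ℝ),
    (volume (ball x r.1)) ^ (α / (n : ℝ) - 1) * ∫⁻ y in ball x r.1, ENNReal.ofReal |f y|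

/-- The generalized weighted Morrey norm `‖f‖_{M^{p,w}_ψ}`. -/
def morreyNorm {n : ℕ} (p : ℝ) (w : EuclideanSpace ℝ (Fin n) → ℝ)
    (ψ : EuclideanSpace ℝ (Fin n) → ℝ → ℝ) (f : EuclideanSpace ℝ (Fin n) → ℝ) : ℝ≥0∞ :=
  ⨆ (a : EuclideanSpace ℝ (Fin n)) (r : Set.Ioi (0 : ℝ)),
    (ENNReal.ofReal (ψ a r.1))⁻¹ * wSet w (ball a r.1) ^ (-(1 / p)) * wLp p w f (ball a r.1)

/-- The generalized weighted Morrey norm for an `ℝ≥0∞`-valued function. -/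
def morreyNormE {n : ℕ} (p : ℝ) (w : EuclideanSpace ℝ (Fin n) → ℝ)
    (ψ : EuclideanSpace ℝ (Fin n) → ℝ → ℝ) (g : EuclideanSpace ℝ (Fin n) → ℝ≥0∞) : ℝ≥0∞ :=
  ⨆ (a : EuclideanSpace ℝ (Fin n)) (r : Set.Ioi (0 : ℝ)),
    (ENNReal.ofReal (ψ a r.1))⁻¹ * wSet w (ball a r.1) ^ (-(1 / p)) * wLpE p w g (ball a r.1)

/-- The generalized weighted weak Morrey norm `‖f‖_{WM^{p,w}_ψ}`. -/
def morreyWeakNorm {n : ℕ} (p : ℝ) (w : EuclideanSpace ℝ (Fin n) → ℝ)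
    (ψ : EuclideanSpace ℝ (Fin n) → ℝ → ℝ) (f : EuclideanSpace ℝ (Fin n) → ℝ) : ℝ≥0∞ :=
  ⨆ (a : EuclideanSpace ℝ (Fin n)) (r : Set.Ioi (0 : ℝ)),
    (ENNReal.ofReal (ψ a r.1))⁻¹ * wSet w (ball a r.1) ^ (-(1 / p)) * wWeakLp p w f (ball a r.1)

/-- The generalized weighted weak Morrey norm for an `ℝ≥0∞`-valued function. -/
def morreyWeakNormE {n : ℕ} (p : ℝ) (w : EuclideanSpace ℝ (Fin n) → ℝ)
    (ψ : EuclideanSpace ℝ (Fin n) → ℝ → ℝ) (g : EuclideanSpace ℝ (Fin n) → ℝ≥0∞) : ℝ≥0∞ :=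
  ⨆ (a : EuclideanSpace ℝ (Fin n)) (r : Set.Ioi (0 : ℝ)),
    (ENNReal.ofReal (ψ a r.1))⁻¹ * wSet w (ball a r.1) ^ (-(1 / p)) * wWeakLpE p w g (ball a r.1)

end
/-- Uncentered maximal function with respect to `μ`. -/
noncomputable def uncM {n : ℕ} (μ : Measure (EuclideanSpace ℝ (Fin n))) (g : EuclideanSpace ℝ (Fin n) → ℝ≥0∞)
    (x : EuclideanSpace ℝ (Fin n)) : ℝ≥0∞ :=
  ⨆ b : EuclideanSpace ℝ (Fin n) × ℝ, ⨆ (_ : x ∈ ball b.1 b.2),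
    (μ (ball b.1 b.2))⁻¹ * ∫⁻ y in ball b.1 b.2, g y ∂μ

lemma uncM_superlevel {n : ℕ} (μ : Measure (EuclideanSpace ℝ (Fin n)))
    (g : EuclideanSpace ℝ (Fin n) → ℝ≥0∞) (t : ℝ≥0∞) :
    {x | t < uncM μ g x} =
      ⋃ b : {b : EuclideanSpace ℝ (Fin n) × ℝ //
        t < (μ (ball b.1 b.2))⁻¹ * ∫⁻ y in ball b.1 b.2, g y ∂μ}, ball b.1.1 b.1.2 := by
  ext x
  simp only [uncM, mem_ofPred_eq, lt_iSup_iff, mem_iUnion]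
  constructor
  · rintro ⟨b, hx, hb⟩
    exact ⟨⟨b, hb⟩, hx⟩
  · rintro ⟨⟨b, hb⟩, hx⟩
    exact ⟨b, hx, hb⟩

lemma uncM_isOpen {n : ℕ} (μ : Measure (EuclideanSpace ℝ (Fin n)))
    (g : EuclideanSpace ℝ (Fin n) → ℝ≥0∞) (t : ℝ≥0∞) : IsOpen {x | t < uncM μ g x} := by
  rw [uncM_superlevel]
  exact isOpen_iUnion fun _ => isOpen_ball

lemma uncM_measurable {n : ℕ} (μ : Measure (EuclideanSpace ℝ (Fin n)))
    (g : EuclideanSpace ℝ (Fin n) → ℝ≥0∞) : Measurable (uncM μ g) :=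
  measurable_of_Ioi fun t => (uncM_isOpen μ g t).measurableSet

lemma le_uncM {n : ℕ} (μ : Measure (EuclideanSpace ℝ (Fin n)))
    (g : EuclideanSpace ℝ (Fin n) → ℝ≥0∞) {x c : EuclideanSpace ℝ (Fin n)} {r : ℝ}
    (hx : x ∈ ball c r) :
    (μ (ball c r))⁻¹ * ∫⁻ y in ball c r, g y ∂μ ≤ uncM μ g x :=
  le_iSup₂_of_le (f := fun (b : EuclideanSpace ℝ (Fin n) × ℝ) (_ : x ∈ ball b.1 b.2) =>
    (μ (ball b.1 b.2))⁻¹ * ∫⁻ y in ball b.1 b.2, g y ∂μ) (c, r) hx le_rfl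

lemma uncM_good_ball {n : ℕ} (μ : Measure (EuclideanSpace ℝ (Fin n)))
    (hfin : ∀ c r, μ (ball c r) ≠ ⊤)
    (g : EuclideanSpace ℝ (Fin n) → ℝ≥0∞) (hg : Measurable g) (t : ℝ≥0∞) (ht' : t ≠ ⊤)
    (c : EuclideanSpace ℝ (Fin n)) (r : ℝ)
    (h : t < (μ (ball c r))⁻¹ * ∫⁻ y in ball c r, g y ∂μ) :
    t * μ (ball c r) ≤ 2 * ∫⁻ y in ball c r, {y | t < 2 * g y}.indicator g y ∂μ := by
  have hfin := hfin c r
  set B := ball c r with hB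
  rcases eq_or_ne (μ B) 0 with h0 | h0
  · simp [h0]
  have h1 : μ B * t ≤ ∫⁻ y in B, g y ∂μ := (ENNReal.mul_le_iff_le_inv h0 hfin).2 h.le
  have hms : MeasurableSet {y | t < 2 * g y} := measurableSet_lt measurable_const (hg.const_mul 2)
  have h2 : ∫⁻ y in B, 2 * g y ∂μ ≤ 2 * (∫⁻ y in B, {y | t < 2 * g y}.indicator g y ∂μ) + t * μ B := by
    rw [← setLIntegral_const, ← lintegral_const_mul _ (hg.indicator hms), ← lintegral_add_right _ measurable_const]
    refine lintegral_mono fun y => ?_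
    by_cases hy : t < 2 * g y
    · have : y ∈ {y | t < 2 * g y} := hy
      simp [indicator_of_mem this]
    · have : y ∉ {y | t < 2 * g y} := hy
      simpa [indicator_of_notMem this] using hy
  rw [lintegral_const_mul _ hg] at h2
  have h3 : t * μ B + t * μ B ≤ 2 * (∫⁻ y in B, {y | t < 2 * g y}.indicator g y ∂μ) + t * μ B := by
    refine le_trans ?_ h2
    rw [← two_mul, mul_comm t]
    gcongr
  exact (ENNReal.add_le_add_iff_right (ENNReal.mul_ne_top ht' hfin)).1 h3

lemma uncM_weak {n : ℕ} (μ : Measure (EuclideanSpace ℝ (Fin n))) [IsLocallyFiniteMeasure μ]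
    (D : ℝ≥0∞) (hD : ∀ c r, 0 < r → μ (ball c (5 * r)) ≤ D * μ (ball c r))
    (hfin : ∀ c r, μ (ball c r) ≠ ⊤)
    (g : EuclideanSpace ℝ (Fin n) → ℝ≥0∞) (hg : Measurable g) (t : ℝ≥0∞) (ht' : t ≠ ⊤) :
    t * μ {x | t < uncM μ g x} ≤ 2 * D * ∫⁻ y, {y | t < 2 * g y}.indicator g y ∂μ := by
  rw [(uncM_isOpen μ g t).measure_eq_iSup_isCompact]
  simp only [ENNReal.mul_iSup]
  refine iSup_le fun K => iSup_le fun hK => iSup_le fun hKc => ?_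
  rw [uncM_superlevel] at hK
  obtain ⟨T, hT⟩ := hKc.elim_finite_subcover _ (fun _ => isOpen_ball) hK
  classical
  set T' := T.filter (fun b => 0 < b.1.2) with hT'
  obtain ⟨R, hR⟩ : ∃ R : ℝ, ∀ b ∈ T', b.1.2 ≤ R := by
    obtain ⟨R, hR⟩ := (T'.image fun b => b.1.2).bddAbove
    exact ⟨R, fun b hb => hR (Finset.mem_coe.2 (Finset.mem_image.2 ⟨b, hb, rfl⟩))⟩
  obtain ⟨u, hu, hdisj, hcov⟩ := Vitali.exists_disjoint_subfamily_covering_enlargement_closedBall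
    (T' : Set {b : EuclideanSpace ℝ (Fin n) × ℝ //
        t < (μ (ball b.1 b.2))⁻¹ * ∫⁻ y in ball b.1 b.2, g y ∂μ}) (fun b => b.1.1) (fun b => b.1.2) R hR 4 (by norm_num)
  have hufin : u.Finite := T'.finite_toSet.subset hu
  have hpos : ∀ b ∈ u, 0 < b.1.2 := fun b hb => (Finset.mem_filter.1 (hu hb)).2
  have hKu : K ⊆ ⋃ b ∈ u, ball b.1.1 (5 * b.1.2) := by
    intro x hx
    obtain ⟨b, hb, hxb⟩ := mem_iUnion₂.1 (hT hx)
    have hb' : b ∈ T' := Finset.mem_filter.2 ⟨hb, pos_of_mem_ball hxb⟩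
    obtain ⟨b2, hb2, hs⟩ := hcov b hb'
    refine mem_iUnion₂.2 ⟨b2, hb2, ?_⟩
    exact closedBall_subset_ball (by linarith [hpos b2 hb2]) (hs (ball_subset_closedBall hxb))
  have hdisj' : u.PairwiseDisjoint fun b => ball b.1.1 b.1.2 :=
    hdisj.mono_on fun b _ => ball_subset_closedBall
  calc t * μ K ≤ t * ∑ b ∈ hufin.toFinset, μ (ball b.1.1 (5 * b.1.2)) := by
        gcongr
        refine (measure_mono hKu).trans ?_
        have := measure_biUnion_finset_le (μ := μ) hufin.toFinset (fun b => ball b.1.1 (5 * b.1.2))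
        simpa using this
    _ ≤ t * ∑ b ∈ hufin.toFinset, D * μ (ball b.1.1 b.1.2) := by
        gcongr with b hb
        exact hD _ _ (hpos b (by simpa using hb))
    _ = D * ∑ b ∈ hufin.toFinset, t * μ (ball b.1.1 b.1.2) := by
        rw [← Finset.mul_sum, ← Finset.mul_sum]; ring
    _ ≤ D * ∑ b ∈ hufin.toFinset, 2 * ∫⁻ y in ball b.1.1 b.1.2, {y | t < 2 * g y}.indicator g y ∂μ := by
        refine mul_le_mul' le_rfl (Finset.sum_le_sum fun b hb => ?_)
        exact uncM_good_ball μ hfin g hg t ht' _ _ b.2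
    _ = 2 * D * ∫⁻ y in ⋃ b ∈ hufin.toFinset, ball b.1.1 b.1.2, {y | t < 2 * g y}.indicator g y ∂μ := by
        rw [lintegral_biUnion_finset, ← Finset.mul_sum]
        · ring
        · simpa using hdisj'
        · exact fun b _ => measurableSet_ball
    _ ≤ _ := by
        gcongr
        exact Measure.restrict_le_self

lemma layer_pt (q : ℝ) (hq : 0 < q) (h : ℝ≥0∞) :
    ENNReal.ofReal q * ∫⁻ t in Ioi (0:ℝ),
      (if ENNReal.ofReal t < h then 1 else 0) * ENNReal.ofReal (t ^ (q - 1)) = h ^ q := by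
  have key : ∀ a : ℝ, 0 ≤ a → ENNReal.ofReal q * ∫⁻ t in Ioi (0:ℝ),
      (if ENNReal.ofReal t < ENNReal.ofReal a then 1 else 0) * ENNReal.ofReal (t ^ (q - 1))
        = ENNReal.ofReal a ^ q := by
    intro a ha
    have := lintegral_rpow_eq_lintegral_meas_lt_mul (Measure.dirac ()) (f := fun _ => a)
      (Filter.Eventually.of_forall fun _ => ha) aemeasurable_const hq
    simp only [lintegral_dirac] at this
    rw [ENNReal.ofReal_rpow_of_nonneg ha hq.le, this]
    congr 1
    refine setLIntegral_congr_fun measurableSet_Ioi fun t ht => ?_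
    have ht0 : (0:ℝ) < t := ht
    by_cases hta : t < a
    · have : ENNReal.ofReal t < ENNReal.ofReal a := (ENNReal.ofReal_lt_ofReal_iff_of_nonneg ht0.le).2 hta
      simp [hta, this]
    · have : ¬ ENNReal.ofReal t < ENNReal.ofReal a := by
        rwa [ENNReal.ofReal_lt_ofReal_iff_of_nonneg ht0.le]
      simp [hta, this]
  rcases eq_or_ne h ⊤ with rfl | hh
  · rw [ENNReal.top_rpow_of_pos hq]
    refine ENNReal.eq_top_of_forall_nnreal_le fun r => ?_
    have h1 := key ((r:ℝ) ^ (1/q)) (by positivity)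
    rw [ENNReal.ofReal_rpow_of_nonneg (by positivity) hq.le, ← Real.rpow_mul (by positivity),
      one_div_mul_cancel hq.ne', Real.rpow_one, ENNReal.ofReal_coe_nnreal] at h1
    rw [← h1]
    gcongr with t
    split_ifs <;> simp_all
  · have := key h.toReal ENNReal.toReal_nonneg
    rwa [ENNReal.ofReal_toReal hh] at this

lemma uncM_strong {n : ℕ} (μ : Measure (EuclideanSpace ℝ (Fin n))) [IsLocallyFiniteMeasure μ]
    (D : ℝ≥0∞) (hD : ∀ c r, 0 < r → μ (ball c (5 * r)) ≤ D * μ (ball c r))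
    (hfin : ∀ c r, μ (ball c r) ≠ ⊤) (q : ℝ) (hq : 1 < q)
    (g : EuclideanSpace ℝ (Fin n) → ℝ≥0∞) (hg : Measurable g) :
    ∫⁻ x, uncM μ g x ^ q ∂μ ≤
      (ENNReal.ofReal q * (2 * D) * (ENNReal.ofReal (q - 1))⁻¹ * 2 ^ (q - 1)) * ∫⁻ x, g x ^ q ∂μ := by
  have hq1 : 0 < q - 1 := by linarith
  have hN := uncM_measurable μ g
  have e1 : ∫⁻ x, uncM μ g x ^ q ∂μ = ENNReal.ofReal q * ∫⁻ t in Ioi (0:ℝ),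
      μ {x | ENNReal.ofReal t < uncM μ g x} * ENNReal.ofReal (t ^ (q - 1)) := by
    have hm : Measurable (Function.uncurry fun (x : EuclideanSpace ℝ (Fin n)) (t : ℝ) =>
      (if ENNReal.ofReal t < uncM μ g x then 1 else 0) * ENNReal.ofReal (t ^ (q - 1))) := by
      refine Measurable.mul ?_ (by fun_prop)
      refine Measurable.ite ?_ measurable_const measurable_const
      exact measurableSet_lt (by fun_prop) (hN.comp measurable_fst)
    simp_rw [← layer_pt q (by linarith)]
    rw [lintegral_const_mul _ (by simpa using hm.lintegral_prod_right'), lintegral_lintegral_swap hm.aemeasurable]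
    congr 1
    refine lintegral_congr fun t => ?_
    rw [lintegral_mul_const]
    · congr 1
      rw [← lintegral_indicator_one (measurableSet_lt measurable_const hN)]
      refine lintegral_congr fun x => ?_
      simp [indicator_apply]
    · exact Measurable.ite (measurableSet_lt measurable_const hN) measurable_const measurable_const
  have hm2 : Measurable (Function.uncurry fun (x : EuclideanSpace ℝ (Fin n)) (t : ℝ) =>
      g x * ((if ENNReal.ofReal t < 2 * g x then 1 else 0) * ENNReal.ofReal (t ^ (q - 1 - 1)))) := by
    refine Measurable.mul (hg.comp measurable_fst) (Measurable.mul ?_ (by fun_prop))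
    refine Measurable.ite ?_ measurable_const measurable_const
    exact measurableSet_lt (by fun_prop) ((hg.comp measurable_fst).const_mul 2)
  have e2 : ∫⁻ t in Ioi (0:ℝ), μ {x | ENNReal.ofReal t < uncM μ g x} * ENNReal.ofReal (t ^ (q - 1))
      ≤ ∫⁻ t in Ioi (0:ℝ), 2 * D * ∫⁻ x, g x * ((if ENNReal.ofReal t < 2 * g x then 1 else 0)
        * ENNReal.ofReal (t ^ (q - 1 - 1))) ∂μ := by
    refine setLIntegral_mono' measurableSet_Ioi fun t ht => ?_
    have ht0 : (0:ℝ) < t := ht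
    have hs : ENNReal.ofReal (t ^ (q - 1)) = ENNReal.ofReal t * ENNReal.ofReal (t ^ (q - 1 - 1)) := by
      rw [← ENNReal.ofReal_mul ht0.le, Real.rpow_sub_one ht0.ne' (q - 1)]
      congr 1; field_simp
    have hw := uncM_weak μ D hD hfin g hg (ENNReal.ofReal t) ENNReal.ofReal_ne_top
    have hms : MeasurableSet {y | ENNReal.ofReal t < 2 * g y} :=
      measurableSet_lt measurable_const (hg.const_mul 2)
    have e3 : ∫⁻ x, g x * ((if ENNReal.ofReal t < 2 * g x then 1 else 0)
        * ENNReal.ofReal (t ^ (q - 1 - 1))) ∂μ =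
        (∫⁻ y, {y | ENNReal.ofReal t < 2 * g y}.indicator g y ∂μ) * ENNReal.ofReal (t ^ (q - 1 - 1)) := by
      rw [← lintegral_mul_const _ (hg.indicator hms)]
      refine lintegral_congr fun x => ?_
      by_cases hx : ENNReal.ofReal t < 2 * g x
      · have : x ∈ {y | ENNReal.ofReal t < 2 * g y} := hx
        rw [indicator_of_mem this]; simp [hx]
      · have : x ∉ {y | ENNReal.ofReal t < 2 * g y} := hx
        rw [indicator_of_notMem this]; simp [hx]
    rw [e3, hs, ← mul_assoc, ← mul_assoc, mul_comm (μ _)]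
    gcongr
  rw [e1]
  refine (mul_le_mul' le_rfl e2).trans (le_of_eq ?_)
  calc _ = ENNReal.ofReal q * (2 * D * ∫⁻ x, (∫⁻ t in Ioi (0:ℝ), g x * ((if ENNReal.ofReal t < 2 * g x then 1 else 0)
        * ENNReal.ofReal (t ^ (q - 1 - 1)))) ∂μ) := by
        rw [lintegral_const_mul, lintegral_lintegral_swap hm2.aemeasurable]
        exact Measurable.lintegral_prod_left' hm2
    _ = ENNReal.ofReal q * (2 * D * ∫⁻ x, ((ENNReal.ofReal (q - 1))⁻¹ * 2 ^ (q - 1)) * g x ^ q ∂μ) := by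
        congr 2
        refine lintegral_congr fun x => ?_
        have hl := layer_pt (q - 1) hq1 (2 * g x)
        rw [lintegral_const_mul]
        · have h0 : ENNReal.ofReal (q - 1) ≠ 0 := by simpa using hq
          have : ∫⁻ t in Ioi (0:ℝ), (if ENNReal.ofReal t < 2 * g x then 1 else 0)
              * ENNReal.ofReal (t ^ (q - 1 - 1)) = (ENNReal.ofReal (q - 1))⁻¹ * (2 * g x) ^ (q - 1) := by
            rw [← hl, ← mul_assoc, ENNReal.inv_mul_cancel h0 ENNReal.ofReal_ne_top, one_mul]
          rw [this, ENNReal.mul_rpow_of_nonneg _ _ hq1.le]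
          have : g x ^ q = g x * g x ^ (q - 1) := by
            conv_lhs => rw [show q = 1 + (q - 1) by ring]
            rw [ENNReal.rpow_add_of_nonneg _ _ zero_le_one hq1.le, ENNReal.rpow_one]
          rw [this]; ring
        · refine Measurable.mul ?_ (by fun_prop)
          exact Measurable.ite (measurableSet_lt (by fun_prop) measurable_const) measurable_const measurable_const
    _ = _ := by
        rw [lintegral_const_mul _ (hg.pow_const q)]; ring

section ApFacts

variable {n : ℕ} {p : ℝ} {W : EuclideanSpace ℝ (Fin n) → ℝ≥0∞}

lemma ball_lint_ne_zero {V : EuclideanSpace ℝ (Fin n) → ℝ≥0∞} (hV : Measurable V)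
    (h : ∀ᵐ x, V x ≠ 0) (c : EuclideanSpace ℝ (Fin n)) {r : ℝ} (hr : 0 < r) :
    ∫⁻ x in ball c r, V x ≠ 0 := by
  intro h0
  rw [lintegral_eq_zero_iff hV] at h0
  have h1 : ∀ᵐ x ∂(volume.restrict (ball c r)), False := by
    filter_upwards [h0, ae_restrict_of_ae h] with x h2 h3
    exact h3 h2
  have h2 : volume (ball c r) = 0 := by
    rw [Filter.eventually_false_iff_eq_bot, ae_eq_bot, Measure.restrict_eq_zero] at h1
    exact h1
  exact (measure_ball_pos volume c hr).ne' h2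

lemma ap_holder (hp : 1 < p) (hWm : Measurable W) (hW : ∀ᵐ x, W x ≠ 0 ∧ W x ≠ ⊤)
    {F : EuclideanSpace ℝ (Fin n) → ℝ≥0∞} (hF : Measurable F)
    (B : Set (EuclideanSpace ℝ (Fin n))) :
    (∫⁻ x in B, F x) ^ p ≤
      (∫⁻ x in B, F x ^ p * W x) * (∫⁻ x in B, W x ^ (-(1 / (p - 1)))) ^ (p - 1) := by
  have hp0 : 0 < p := by linarith
  have hp1 : 0 < p - 1 := by linarith
  have hc : p.HolderConjugate (p / (p - 1)) := Real.HolderConjugate.conjExponent hp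
  have h := ENNReal.lintegral_mul_le_Lp_mul_Lq (volume.restrict B) hc
    (f := fun x => F x * W x ^ (1 / p)) (g := fun x => W x ^ (-(1 / p)))
    (by fun_prop) (by fun_prop)
  have e1 : ∫⁻ x in B, F x = ∫⁻ x in B, ((fun x => F x * W x ^ (1 / p)) * fun x => W x ^ (-(1 / p))) x := by
    refine lintegral_congr_ae ?_
    filter_upwards [ae_restrict_of_ae hW] with x hx
    simp only [Pi.mul_apply]
    rw [mul_assoc, ← ENNReal.rpow_add _ _ hx.1 hx.2]
    simp
  have e2 : ∫⁻ x in B, (F x * W x ^ (1 / p)) ^ p = ∫⁻ x in B, F x ^ p * W x := by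
    refine lintegral_congr fun x => ?_
    rw [ENNReal.mul_rpow_of_nonneg _ _ hp0.le, ← ENNReal.rpow_mul, one_div_mul_cancel hp0.ne',
      ENNReal.rpow_one]
  have e3 : ∫⁻ x in B, (W x ^ (-(1 / p))) ^ (p / (p - 1)) = ∫⁻ x in B, W x ^ (-(1 / (p - 1))) := by
    refine lintegral_congr fun x => ?_
    rw [← ENNReal.rpow_mul]
    congr 1; field_simp
  rw [← e1, e2, e3] at h
  refine (ENNReal.rpow_le_rpow h hp0.le).trans (le_of_eq ?_)
  rw [ENNReal.mul_rpow_of_nonneg _ _ hp0.le, ← ENNReal.rpow_mul, ← ENNReal.rpow_mul,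
    one_div_mul_cancel hp0.ne', ENNReal.rpow_one]
  congr 2; field_simp

lemma vol_five (c : EuclideanSpace ℝ (Fin n)) (r : ℝ) :
    volume (ball c (5 * r)) = ENNReal.ofReal (5 ^ n) * volume (ball c r) := by
  rw [Measure.addHaar_ball_mul_of_pos volume c (by norm_num : (0:ℝ) < 5) r,
    Measure.addHaar_ball_center volume c r]
  simp

lemma ap_doubling (hp : 1 < p) (hWm : Measurable W) (hW : ∀ᵐ x, W x ≠ 0 ∧ W x ≠ ⊤)
    {K : ℝ≥0∞} (hAp : ∀ c r, 0 < r → (∫⁻ x in ball c r, W x) *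
      (∫⁻ x in ball c r, W x ^ (-(1 / (p - 1)))) ^ (p - 1) ≤ K * volume (ball c r) ^ p)
    (c : EuclideanSpace ℝ (Fin n)) {r : ℝ} (hr : 0 < r) :
    (∫⁻ x in ball c (5 * r), W x) * (∫⁻ x in ball c (5 * r), W x ^ (-(1 / (p - 1)))) ^ (p - 1) ≤
      (K * ENNReal.ofReal (5 ^ n) ^ p) *
      ((∫⁻ x in ball c r, W x) * (∫⁻ x in ball c r, W x ^ (-(1 / (p - 1)))) ^ (p - 1)) := by
  have hp0 : 0 < p := by linarith
  refine (hAp c (5 * r) (by linarith)).trans ?_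
  rw [vol_five, ENNReal.mul_rpow_of_nonneg _ _ hp0.le, mul_assoc K]
  gcongr
  have := ap_holder hp hWm hW (F := fun _ => 1) measurable_const (ball c r)
  simpa using this

lemma ap_S_ne_zero (hp : 1 < p) (hWm : Measurable W) (hW : ∀ᵐ x, W x ≠ 0 ∧ W x ≠ ⊤)
    (c : EuclideanSpace ℝ (Fin n)) {r : ℝ} (hr : 0 < r) :
    ∫⁻ x in ball c r, W x ^ (-(1 / (p - 1))) ≠ 0 := by
  refine ball_lint_ne_zero (by fun_prop) ?_ c hr
  filter_upwards [hW] with x hx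
  have : 0 < p - 1 := by linarith
  simp [ENNReal.rpow_eq_zero_iff, hx.1, hx.2]

lemma ap_S_ne_top (hp : 1 < p) (hWm : Measurable W) (hW : ∀ᵐ x, W x ≠ 0 ∧ W x ≠ ⊤)
    {K : ℝ≥0∞} (hK : K ≠ ⊤) (hAp : ∀ c r, 0 < r → (∫⁻ x in ball c r, W x) *
      (∫⁻ x in ball c r, W x ^ (-(1 / (p - 1)))) ^ (p - 1) ≤ K * volume (ball c r) ^ p)
    (c : EuclideanSpace ℝ (Fin n)) (r : ℝ) :
    ∫⁻ x in ball c r, W x ^ (-(1 / (p - 1))) ≠ ⊤ := by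
  rcases le_or_gt r 0 with hr | hr
  · simp [ball_eq_empty.2 hr]
  intro h
  have h1 := hAp c r hr
  rw [h, ENNReal.top_rpow_of_pos (by linarith),
    ENNReal.mul_top (ball_lint_ne_zero hWm (hW.mono fun x hx => hx.1) c hr), top_le_iff] at h1
  exact ENNReal.mul_ne_top hK (ENNReal.rpow_ne_top_of_nonneg (by linarith) measure_ball_lt_top.ne) h1

lemma ap_doubling_W (hp : 1 < p) (hWm : Measurable W) (hW : ∀ᵐ x, W x ≠ 0 ∧ W x ≠ ⊤)
    {K : ℝ≥0∞} (hK : K ≠ ⊤) (hAp : ∀ c r, 0 < r → (∫⁻ x in ball c r, W x) *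
      (∫⁻ x in ball c r, W x ^ (-(1 / (p - 1)))) ^ (p - 1) ≤ K * volume (ball c r) ^ p)
    (c : EuclideanSpace ℝ (Fin n)) {r : ℝ} (hr : 0 < r) :
    (∫⁻ x in ball c (5 * r), W x) ≤ (K * ENNReal.ofReal (5 ^ n) ^ p) * ∫⁻ x in ball c r, W x := by
  have hp1 : 0 < p - 1 := by linarith
  have h1 := ap_doubling hp hWm hW hAp c hr
  have hs0 := ap_S_ne_zero hp hWm hW c (r := 5 * r) (by linarith)
  have hst := ap_S_ne_top hp hWm hW hK hAp c (5 * r)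
  set S5 := ∫⁻ x in ball c (5 * r), W x ^ (-(1 / (p - 1)))
  have hmono : (∫⁻ x in ball c r, W x ^ (-(1 / (p - 1)))) ^ (p - 1) ≤ S5 ^ (p - 1) :=
    ENNReal.rpow_le_rpow (lintegral_mono_set (ball_subset_ball (by linarith))) hp1.le
  refine (ENNReal.mul_le_mul_iff_left (c := S5 ^ (p - 1)) ?_ ?_).1 (h1.trans ?_)
  · simp [ENNReal.rpow_eq_zero_iff, hs0, hst]
  · exact ENNReal.rpow_ne_top_of_nonneg hp1.le hst
  · rw [mul_assoc (K * _)]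
    gcongr

lemma ap_doubling_S (hp : 1 < p) (hWm : Measurable W) (hW : ∀ᵐ x, W x ≠ 0 ∧ W x ≠ ⊤)
    (hWfin : ∀ c r, ∫⁻ x in ball c r, W x ≠ ⊤)
    {K : ℝ≥0∞} (hAp : ∀ c r, 0 < r → (∫⁻ x in ball c r, W x) *
      (∫⁻ x in ball c r, W x ^ (-(1 / (p - 1)))) ^ (p - 1) ≤ K * volume (ball c r) ^ p)
    (c : EuclideanSpace ℝ (Fin n)) {r : ℝ} (hr : 0 < r) :
    (∫⁻ x in ball c (5 * r), W x ^ (-(1 / (p - 1)))) ≤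
      (K * ENNReal.ofReal (5 ^ n) ^ p) ^ (1 / (p - 1)) * ∫⁻ x in ball c r, W x ^ (-(1 / (p - 1))) := by
  have hp1 : 0 < p - 1 := by linarith
  have h1 := ap_doubling hp hWm hW hAp c hr
  have hs0 := ball_lint_ne_zero hWm (hW.mono fun x hx => hx.1) c (r := 5 * r) (by linarith)
  have hst := hWfin c (5 * r)
  set W5 := ∫⁻ x in ball c (5 * r), W x
  have hmono : (∫⁻ x in ball c r, W x) ≤ W5 :=
    lintegral_mono_set (ball_subset_ball (by linarith))
  rw [← ENNReal.rpow_le_rpow_iff hp1, ENNReal.mul_rpow_of_nonneg _ _ hp1.le, ← ENNReal.rpow_mul,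
    one_div_mul_cancel hp1.ne', ENNReal.rpow_one]
  refine (ENNReal.mul_le_mul_iff_right hs0 hst).1 (h1.trans ?_)
  rw [mul_left_comm]
  gcongr

lemma lerner_pt (hp : 1 < p) (hWm : Measurable W) (hW : ∀ᵐ x, W x ≠ 0 ∧ W x ≠ ⊤)
    (hWfin : ∀ c r, ∫⁻ x in ball c r, W x ≠ ⊤)
    {K : ℝ≥0∞} (hK : K ≠ ⊤) (hAp : ∀ c r, 0 < r → (∫⁻ x in ball c r, W x) *
      (∫⁻ x in ball c r, W x ^ (-(1 / (p - 1)))) ^ (p - 1) ≤ K * volume (ball c r) ^ p)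
    {F : EuclideanSpace ℝ (Fin n) → ℝ≥0∞} (hF : Measurable F)
    (x : EuclideanSpace ℝ (Fin n)) {r : ℝ} (hr : 0 < r) :
    ((volume (ball x r))⁻¹ * ∫⁻ y in ball x r, F y) ^ (p - 1) ≤
      K * uncM (volume.withDensity W) (fun z =>
        uncM (volume.withDensity fun y => W y ^ (-(1 / (p - 1))))
          (fun y => F y * (W y ^ (-(1 / (p - 1))))⁻¹) z ^ (p - 1) * (W z)⁻¹) x := by
  have hp1 : 0 < p - 1 := by linarith
  have hSm : Measurable fun y => W y ^ (-(1 / (p - 1))) := by fun_prop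
  have hs0 := ap_S_ne_zero hp hWm hW x hr
  have hst := ap_S_ne_top hp hWm hW hK hAp x r
  have hw0 := ball_lint_ne_zero hWm (hW.mono fun x hx => hx.1) x hr
  have hwt := hWfin x r
  have hA := hAp x r hr
  set ν := volume.withDensity fun y => W y ^ (-(1 / (p - 1))) with hν
  set g := fun y => F y * (W y ^ (-(1 / (p - 1))))⁻¹ with hg
  have hgm : Measurable g := by fun_prop
  set h := fun z => uncM ν g z ^ (p - 1) * (W z)⁻¹ with hh
  have hN := uncM_measurable ν g
  have hhm : Measurable h := by fun_prop
  have hνB : ν (ball x r) = ∫⁻ y in ball x r, W y ^ (-(1 / (p - 1))) :=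
    withDensity_apply _ measurableSet_ball
  have hμB : (volume.withDensity W) (ball x r) = ∫⁻ y in ball x r, W y :=
    withDensity_apply _ measurableSet_ball
  have e1 : ∫⁻ y in ball x r, g y ∂ν = ∫⁻ y in ball x r, F y := by
    rw [hν, setLIntegral_withDensity_eq_setLIntegral_mul _ hSm hgm measurableSet_ball]
    refine lintegral_congr_ae ?_
    filter_upwards [ae_restrict_of_ae hW] with y hy
    simp only [Pi.mul_apply, hg]
    rw [mul_left_comm, ENNReal.mul_inv_cancel, mul_one]
    · simp [ENNReal.rpow_eq_zero_iff, hy.1, hy.2]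
    · simp [ENNReal.rpow_eq_top_iff, hy.1, hy.2]
  set A := (ν (ball x r))⁻¹ * ∫⁻ y in ball x r, g y ∂ν with hAdef
  have e2 : ∫⁻ y in ball x r, F y = ν (ball x r) * A := by
    rw [hAdef, ← mul_assoc, ENNReal.mul_inv_cancel (by rwa [hνB]) (by rwa [hνB]), one_mul, e1]
  have e3 : A ^ (p - 1) * volume (ball x r) ≤ ∫⁻ z in ball x r, h z ∂(volume.withDensity W) := by
    rw [setLIntegral_withDensity_eq_setLIntegral_mul _ hWm hhm measurableSet_ball, ← setLIntegral_const]
    refine lintegral_mono_ae ?_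
    filter_upwards [ae_restrict_of_ae hW, ae_restrict_mem measurableSet_ball] with y hy hyB
    simp only [Pi.mul_apply, hh]
    rw [mul_left_comm, ENNReal.mul_inv_cancel hy.1 hy.2, mul_one]
    exact ENNReal.rpow_le_rpow (le_uncM ν g hyB) hp1.le
  have e4 := le_uncM (volume.withDensity W) h (mem_ball_self hr : x ∈ ball x r)
  rw [hμB] at e4
  refine le_trans ?_ (mul_le_mul' le_rfl (le_trans (mul_le_mul' le_rfl e3) e4))
  rw [e2, hνB]
  have hv0 : volume (ball x r) ≠ 0 := (measure_ball_pos volume x hr).ne'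
  have hvt : volume (ball x r) ≠ ⊤ := measure_ball_lt_top.ne
  set v := volume (ball x r)
  set s := ∫⁻ y in ball x r, W y ^ (-(1 / (p - 1)))
  set m := ∫⁻ y in ball x r, W y
  have h5 : s ^ (p - 1) ≤ m⁻¹ * (K * v ^ p) := (ENNReal.mul_le_iff_le_inv hw0 hwt).1 hA
  rw [ENNReal.mul_rpow_of_nonneg _ _ hp1.le, ENNReal.mul_rpow_of_nonneg _ _ hp1.le]
  calc v⁻¹ ^ (p - 1) * (s ^ (p - 1) * A ^ (p - 1))
      ≤ v⁻¹ ^ (p - 1) * ((m⁻¹ * (K * v ^ p)) * A ^ (p - 1)) := by gcongr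
    _ = K * (m⁻¹ * (A ^ (p - 1) * (v⁻¹ ^ (p - 1) * v ^ p))) := by ring
    _ = _ := by
      congr 3
      rw [ENNReal.inv_rpow, ← ENNReal.rpow_neg, ← ENNReal.rpow_add _ _ hv0 hvt]
      ring_nf
      simp

lemma muckenhoupt (hp : 1 < p) (hWm : Measurable W) (hW : ∀ᵐ x, W x ≠ 0 ∧ W x ≠ ⊤)
    (hWfin : ∀ c r, ∫⁻ x in ball c r, W x ≠ ⊤)
    {K : ℝ≥0∞} (hK : K ≠ ⊤) (hAp : ∀ c r, 0 < r → (∫⁻ x in ball c r, W x) *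
      (∫⁻ x in ball c r, W x ^ (-(1 / (p - 1)))) ^ (p - 1) ≤ K * volume (ball c r) ^ p) :
    ∃ C : ℝ≥0∞, C ≠ ⊤ ∧ ∀ F : EuclideanSpace ℝ (Fin n) → ℝ≥0∞, Measurable F →
      ∫⁻ x, (⨆ r : Set.Ioi (0 : ℝ), (volume (ball x r.1))⁻¹ * ∫⁻ y in ball x r.1, F y) ^ p * W x
        ≤ C * ∫⁻ x, F x ^ p * W x := by
  have hp0 : 0 < p := by linarith
  have hp1 : 0 < p - 1 := by linarith
  have hSm : Measurable fun y => W y ^ (-(1 / (p - 1))) := by fun_prop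
  set ν := volume.withDensity fun y => W y ^ (-(1 / (p - 1))) with hν
  set μ := volume.withDensity W with hμ
  have hνB : ∀ x r, ν (ball x r) = ∫⁻ y in ball x r, W y ^ (-(1 / (p - 1))) :=
    fun x r => withDensity_apply _ measurableSet_ball
  have hμB : ∀ x r, μ (ball x r) = ∫⁻ y in ball x r, W y :=
    fun x r => withDensity_apply _ measurableSet_ball
  have hνf : ∀ x r, ν (ball x r) ≠ ⊤ := fun x r => by
    rw [hνB]; exact ap_S_ne_top hp hWm hW hK hAp x r
  have hμf : ∀ x r, μ (ball x r) ≠ ⊤ := fun x r => by rw [hμB]; exact hWfin x r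
  have : IsLocallyFiniteMeasure ν :=
    ⟨fun x => ⟨ball x 1, ball_mem_nhds x one_pos, (hνf x 1).lt_top⟩⟩
  have : IsLocallyFiniteMeasure μ :=
    ⟨fun x => ⟨ball x 1, ball_mem_nhds x one_pos, (hμf x 1).lt_top⟩⟩
  have hD : K * ENNReal.ofReal (5 ^ n) ^ p ≠ ⊤ :=
    ENNReal.mul_ne_top hK (ENNReal.rpow_ne_top_of_nonneg hp0.le ENNReal.ofReal_ne_top)
  set D := K * ENNReal.ofReal (5 ^ n) ^ p with hDdef
  have hD' : D ^ (1 / (p - 1)) ≠ ⊤ := ENNReal.rpow_ne_top_of_nonneg (by positivity) hD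
  set q := p / (p - 1) with hqdef
  have hq : 1 < q := by rw [hqdef, one_lt_div hp1]; linarith
  have hq0 : 0 < q := by linarith
  have hcfin : ∀ (q : ℝ) (D : ℝ≥0∞), 1 < q → D ≠ ⊤ →
      ENNReal.ofReal q * (2 * D) * (ENNReal.ofReal (q - 1))⁻¹ * 2 ^ (q - 1) ≠ ⊤ := by
    intro q D hq hD
    refine ENNReal.mul_ne_top (ENNReal.mul_ne_top (ENNReal.mul_ne_top ENNReal.ofReal_ne_top
      (ENNReal.mul_ne_top (by simp) hD)) ?_) (ENNReal.rpow_ne_top_of_nonneg (by linarith) (by simp))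
    simpa using hq
  have hc1 := hcfin q D hq hD
  have hc2 := hcfin p _ hp hD'
  have st1 := uncM_strong μ D (fun c r hr => by
    rw [hμB, hμB]; exact ap_doubling_W hp hWm hW hK hAp c hr) hμf q hq
  have st2 := uncM_strong ν (D ^ (1 / (p - 1))) (fun c r hr => by
    rw [hνB, hνB]; exact ap_doubling_S hp hWm hW hWfin hAp c hr) hνf p hp
  set c1 := ENNReal.ofReal q * (2 * D) * (ENNReal.ofReal (q - 1))⁻¹ * 2 ^ (q - 1)
  set c2 := ENNReal.ofReal p * (2 * D ^ (1 / (p - 1))) * (ENNReal.ofReal (p - 1))⁻¹ * 2 ^ (p - 1)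
  refine ⟨K ^ q * (c1 * c2), ENNReal.mul_ne_top (ENNReal.rpow_ne_top_of_nonneg hq0.le hK)
    (ENNReal.mul_ne_top hc1 hc2), fun F hF => ?_⟩
  set g := fun y => F y * (W y ^ (-(1 / (p - 1))))⁻¹ with hg
  have hgm : Measurable g := by fun_prop
  have hN := uncM_measurable ν g
  set h := fun z => uncM ν g z ^ (p - 1) * (W z)⁻¹ with hh
  have hhm : Measurable h := by fun_prop
  have hN2 := uncM_measurable μ h
  have pt : ∀ x, (⨆ r : Set.Ioi (0 : ℝ), (volume (ball x r.1))⁻¹ * ∫⁻ y in ball x r.1, F y) ^ p ≤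
      K ^ q * uncM μ h x ^ q := by
    intro x
    have h1 : (⨆ r : Set.Ioi (0 : ℝ), (volume (ball x r.1))⁻¹ * ∫⁻ y in ball x r.1, F y) ≤
        (K * uncM μ h x) ^ (1 / (p - 1)) := by
      refine iSup_le fun r => ?_
      rw [← ENNReal.rpow_le_rpow_iff hp1, ← ENNReal.rpow_mul, one_div_mul_cancel hp1.ne', ENNReal.rpow_one]
      exact lerner_pt hp hWm hW hWfin hK hAp hF x r.2
    refine (ENNReal.rpow_le_rpow h1 hp0.le).trans (le_of_eq ?_)
    rw [← ENNReal.rpow_mul, ← ENNReal.mul_rpow_of_nonneg _ _ hq0.le]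
    congr 1; rw [hqdef]; field_simp
  have e1 : ∫⁻ x, h x ^ q ∂μ = ∫⁻ x, uncM ν g x ^ p ∂ν := by
    rw [hμ, lintegral_withDensity_eq_lintegral_mul _ hWm (hhm.pow_const q), hν,
      lintegral_withDensity_eq_lintegral_mul _ hSm (hN.pow_const p)]
    refine lintegral_congr_ae ?_
    filter_upwards [hW] with x hx
    simp only [Pi.mul_apply, hh]
    rw [ENNReal.mul_rpow_of_nonneg _ _ hq0.le, ← ENNReal.rpow_mul, ENNReal.inv_rpow,
      ← ENNReal.rpow_neg, mul_left_comm]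
    have : W x * W x ^ (-q) = W x ^ (-(1 / (p - 1))) := by
      conv_lhs => enter [1]; rw [← ENNReal.rpow_one (W x)]
      rw [← ENNReal.rpow_add _ _ hx.1 hx.2]
      congr 1; rw [hqdef]; field_simp; ring
    rw [this, mul_comm]
    congr 2; rw [hqdef]; field_simp
  have e2 : ∫⁻ x, g x ^ p ∂ν = ∫⁻ x, F x ^ p * W x := by
    rw [hν, lintegral_withDensity_eq_lintegral_mul _ hSm (hgm.pow_const p)]
    refine lintegral_congr_ae ?_
    filter_upwards [hW] with x hx
    simp only [Pi.mul_apply, hg]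
    rw [ENNReal.mul_rpow_of_nonneg _ _ hp0.le, ← ENNReal.rpow_neg, ← ENNReal.rpow_mul, mul_left_comm,
      ← ENNReal.rpow_add _ _ hx.1 hx.2]
    congr 1
    conv_rhs => rw [← ENNReal.rpow_one (W x)]
    congr 1; field_simp; ring
  calc _ ≤ ∫⁻ x, K ^ q * (W x * uncM μ h x ^ q) := by
        refine lintegral_mono fun x => ?_
        calc _ ≤ (K ^ q * uncM μ h x ^ q) * W x := mul_le_mul' (pt x) le_rfl
          _ = _ := by ring
    _ = K ^ q * ∫⁻ x, uncM μ h x ^ q ∂μ := by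
        rw [lintegral_const_mul _ (by fun_prop), hμ,
          lintegral_withDensity_eq_lintegral_mul _ hWm (hN2.pow_const q)]
        rfl
    _ ≤ K ^ q * (c1 * (c2 * ∫⁻ x, g x ^ p ∂ν)) := by
        gcongr
        refine (st1 h hhm).trans ?_
        rw [e1]
        gcongr
        exact st2 g hgm
    _ = _ := by rw [e2]; ring

end ApFacts

lemma tail_bound {p : ℝ} (hp : 1 < p) {m N : ℝ → ℝ≥0∞} {D : ℝ≥0∞}
    (hm : Monotone m) (hN : Monotone N) (hD : ∀ r, 0 < r → m (5 * r) ≤ D * m r)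
    (hm0 : ∀ r, 0 < r → m r ≠ 0) (hmt : ∀ r, m r ≠ ⊤) {r u : ℝ} (hr : 0 < r) (hu : r ≤ u) :
    m u ^ (-(1 / p)) * N u ≤ (2 * D ^ (1 / p)) *
      ∫⁻ s in Set.Ioi r, m s ^ (-(1 / p)) * N s * ENNReal.ofReal s⁻¹ := by
  have hp0 : 0 < p := by linarith
  have hu0 : 0 < u := by linarith
  have h1 : ∀ s ∈ Ioo u (2 * u), m u ^ (-(1 / p)) * N u * ENNReal.ofReal (2 * u)⁻¹ ≤
      D ^ (1 / p) * (m s ^ (-(1 / p)) * N s * ENNReal.ofReal s⁻¹) := by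
    intro s hs
    have hs0 : 0 < s := hu0.trans hs.1
    have hms : m s ≤ D * m u := (hm (by linarith [hs.2])).trans (hD u hu0)
    have h2 : (m u)⁻¹ ≤ D * (m s)⁻¹ := by
      rw [← div_eq_mul_inv, ENNReal.le_div_iff_mul_le (Or.inl (hm0 s hs0)) (Or.inl (hmt s)),
        mul_comm, ← div_eq_mul_inv]
      exact ENNReal.div_le_of_le_mul hms
    have h3 : m u ^ (-(1 / p)) ≤ D ^ (1 / p) * m s ^ (-(1 / p)) := by
      rw [ENNReal.rpow_neg, ENNReal.rpow_neg, ← ENNReal.inv_rpow, ← ENNReal.inv_rpow,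
        ← ENNReal.mul_rpow_of_nonneg _ _ (by positivity)]
      exact ENNReal.rpow_le_rpow h2 (by positivity)
    rw [← mul_assoc, ← mul_assoc]
    gcongr
    · exact hN hs.1.le
    · exact hs.2.le
  have h4 : (m u ^ (-(1 / p)) * N u * ENNReal.ofReal (2 * u)⁻¹) * volume (Ioo u (2 * u)) ≤
      D ^ (1 / p) * ∫⁻ s in Set.Ioi r, m s ^ (-(1 / p)) * N s * ENNReal.ofReal s⁻¹ := by
    have hmm : Measurable fun s => m s ^ (-(1 / p)) * N s * ENNReal.ofReal s⁻¹ :=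
      ((hm.measurable.pow_const _).mul hN.measurable).mul (by fun_prop)
    rw [← setLIntegral_const, ← lintegral_const_mul _ hmm]
    refine (setLIntegral_mono' measurableSet_Ioo h1).trans ?_
    exact lintegral_mono_set fun s hs => lt_of_le_of_lt hu hs.1
  have h5 : ENNReal.ofReal (2 * u)⁻¹ * volume (Ioo u (2 * u)) = 2⁻¹ := by
    rw [Real.volume_Ioo, ← ENNReal.ofReal_mul (by positivity),
      show (2 * u)⁻¹ * (2 * u - u) = 2⁻¹ by field_simp; ring, ENNReal.ofReal_inv_of_pos (by norm_num)]
    simp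
  rw [mul_assoc, h5, ← div_eq_mul_inv, ENNReal.div_le_iff (by simp) (by simp)] at h4
  exact h4.trans (le_of_eq (by ring))

theorem statement8 {n : ℕ} (p : ℝ) (hp : 1 < p)
    (w : EuclideanSpace ℝ (Fin n) → ℝ) (hw : IsWeight w) (hAp : MuckAp p w) :
    ∃ C : ℝ, 0 < C ∧
      ∀ (a : EuclideanSpace ℝ (Fin n)) (r : ℝ) (f : EuclideanSpace ℝ (Fin n) → ℝ),
        0 < r → MemLocWLp p w f →
        wLpE p w (HLMax f) (ball a r) ≤
          ENNReal.ofReal C * wSet w (ball a r) ^ (1 / p) *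
            ∫⁻ s in Set.Ioi r,
              wSet w (ball a s) ^ (-(1 / p)) * wLp p w f (ball a s) *
                ENNReal.ofReal s⁻¹ := by
  obtain ⟨hwm, hwnn, hwloc, hwpos⟩ := hw
  obtain ⟨C0, hC0, hA⟩ := hAp
  have hp0 : 0 < p := by linarith
  have hp1 : 0 < p - 1 := by linarith
  have hip : 0 ≤ 1 / p := by positivity
  set W : EuclideanSpace ℝ (Fin n) → ℝ≥0∞ := fun x => ENNReal.ofReal (w x) with hWdef
  have hWm : Measurable W := by fun_prop
  have hW : ∀ᵐ x, W x ≠ 0 ∧ W x ≠ ⊤ := by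
    filter_upwards [hwpos] with x hx
    exact ⟨by simpa [hWdef] using hx, ENNReal.ofReal_ne_top⟩
  have hWfin : ∀ c r, ∫⁻ x in ball c r, W x ≠ ⊤ := by
    intro c r
    have h1 : IntegrableOn w (ball c r) :=
      (hwloc.integrableOn_isCompact (isCompact_closedBall c r)).mono_set ball_subset_closedBall
    exact (h1.lintegral_lt_top).ne
  set K := ENNReal.ofReal C0 with hKdef
  have hK : K ≠ ⊤ := ENNReal.ofReal_ne_top
  have hApW : ∀ c r, 0 < r → (∫⁻ x in ball c r, W x) *
      (∫⁻ x in ball c r, W x ^ (-(1 / (p - 1)))) ^ (p - 1) ≤ K * volume (ball c r) ^ p := by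
    intro c r hr
    have h1 := hA c r hr
    have e1 : ∫⁻ x in ball c r, ENNReal.ofReal (w x ^ (-(1 / (p - 1)))) =
        ∫⁻ x in ball c r, W x ^ (-(1 / (p - 1))) := by
      refine lintegral_congr_ae ?_
      filter_upwards [ae_restrict_of_ae hwpos] with x hx
      exact (ENNReal.ofReal_rpow_of_pos hx).symm
    rw [e1] at h1
    have hv0 : volume (ball c r) ≠ 0 := (measure_ball_pos volume c hr).ne'
    have hvt : volume (ball c r) ≠ ⊤ := measure_ball_lt_top.ne
    set v := volume (ball c r)
    have h2 : v * v ^ (p - 1) = v ^ p := by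
      conv_lhs => enter [1]; rw [← ENNReal.rpow_one v]
      rw [← ENNReal.rpow_add _ _ hv0 hvt]; ring_nf
    rw [ENNReal.mul_rpow_of_nonneg _ _ hp1.le, ENNReal.inv_rpow] at h1
    have hvp0 : v ^ (p - 1) ≠ 0 := by simp [ENNReal.rpow_eq_zero_iff, hv0, hvt]
    have hvpt : v ^ (p - 1) ≠ ⊤ := ENNReal.rpow_ne_top_of_nonneg hp1.le hvt
    set m := ∫⁻ x in ball c r, W x
    set s := (∫⁻ x in ball c r, W x ^ (-(1 / (p - 1)))) ^ (p - 1)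
    calc m * s = (v * v⁻¹) * (v ^ (p - 1) * (v ^ (p - 1))⁻¹) * (m * s) := by
          rw [ENNReal.mul_inv_cancel hv0 hvt, ENNReal.mul_inv_cancel hvp0 hvpt]; simp
      _ = (v⁻¹ * m * ((v ^ (p - 1))⁻¹ * s)) * (v * v ^ (p - 1)) := by ring
      _ ≤ K * (v * v ^ (p - 1)) := mul_le_mul' h1 le_rfl
      _ = _ := by rw [h2]
  obtain ⟨CM, hCM, hMuck⟩ := muckenhoupt hp hWm hW hWfin hK hApW
  set D := K * ENNReal.ofReal (5 ^ n) ^ p with hDdef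
  have hD : D ≠ ⊤ :=
    ENNReal.mul_ne_top hK (ENNReal.rpow_ne_top_of_nonneg hp0.le ENNReal.ofReal_ne_top)
  set C1 := 2 * D ^ (1 / p) with hC1def
  have hC1 : C1 ≠ ⊤ := ENNReal.mul_ne_top (by simp) (ENNReal.rpow_ne_top_of_nonneg hip hD)
  set Kc := K ^ (1 / p) * ENNReal.ofReal (5 ^ n) * C1 with hKcdef
  have hKc : Kc ≠ ⊤ := ENNReal.mul_ne_top (ENNReal.mul_ne_top
    (ENNReal.rpow_ne_top_of_nonneg hip hK) ENNReal.ofReal_ne_top) hC1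
  set CC := (CM * (C1 ^ p * D) + Kc ^ p) ^ (1 / p) with hCCdef
  have hCC : CC ≠ ⊤ := ENNReal.rpow_ne_top_of_nonneg hip (ENNReal.add_ne_top.2
    ⟨ENNReal.mul_ne_top hCM (ENNReal.mul_ne_top (ENNReal.rpow_ne_top_of_nonneg hp0.le hC1) hD),
     ENNReal.rpow_ne_top_of_nonneg hp0.le hKc⟩)
  refine ⟨CC.toReal + 1, by positivity, fun a r f hr hf => ?_⟩
  obtain ⟨hfm, hfloc⟩ := hf
  set F : EuclideanSpace ℝ (Fin n) → ℝ≥0∞ := fun x => ENNReal.ofReal |f x| with hFdef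
  have hFm : Measurable F := by fun_prop
  set m : ℝ → ℝ≥0∞ := fun s => wSet w (ball a s) with hmdef
  set N : ℝ → ℝ≥0∞ := fun s => wLp p w f (ball a s) with hNdef
  have hmm : Monotone m := fun s t hst => lintegral_mono_set (ball_subset_ball hst)
  have hNm : Monotone N := fun s t hst =>
    ENNReal.rpow_le_rpow (lintegral_mono_set (ball_subset_ball hst)) hip
  have hm0 : ∀ s, 0 < s → m s ≠ 0 := fun s hs =>
    ball_lint_ne_zero hWm (hW.mono fun x hx => hx.1) a hs
  have hmt : ∀ s, m s ≠ ⊤ := fun s => hWfin a s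
  have hmD : ∀ s, 0 < s → m (5 * s) ≤ D * m s := fun s hs =>
    ap_doubling_W hp hWm hW hK hApW a hs
  have hNp : ∀ s, N s ^ p = ∫⁻ x in ball a s, F x ^ p * W x := by
    intro s
    simp only [hNdef, wLp]
    rw [← ENNReal.rpow_mul, one_div_mul_cancel hp0.ne', ENNReal.rpow_one]
  change wLpE p w (HLMax f) (ball a r) ≤ ENNReal.ofReal (CC.toReal + 1) * m r ^ (1 / p) *
    ∫⁻ s in Set.Ioi r, m s ^ (-(1 / p)) * N s * ENNReal.ofReal s⁻¹
  have htail : ∀ u, r ≤ u → m u ^ (-(1 / p)) * N u ≤ C1 *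
      ∫⁻ s in Set.Ioi r, m s ^ (-(1 / p)) * N s * ENNReal.ofReal s⁻¹ := fun u hu =>
    tail_bound hp hmm hNm hmD hm0 hmt hr hu
  set I := ∫⁻ s in Set.Ioi r, m s ^ (-(1 / p)) * N s * ENNReal.ofReal s⁻¹ with hI
  -- large radii
  have hbig : ∀ x ∈ ball a r, ∀ t, r < t →
      (volume (ball x t))⁻¹ * ∫⁻ y in ball x t, F y ≤ Kc * I := by
    intro x hx t ht
    have ht0 : 0 < t := hr.trans ht
    have hsub : ball x t ⊆ ball a (5 * t) := by
      refine ball_subset_ball' ?_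
      have := mem_ball.1 hx
      linarith
    have hvol : volume (ball a (5 * t)) = ENNReal.ofReal (5 ^ n) * volume (ball x t) := by
      rw [vol_five, Measure.addHaar_ball_center volume a t, Measure.addHaar_ball_center volume x t]
    have hH := ap_holder hp hWm hW hFm (ball a (5 * t))
    rw [← hNp] at hH
    have h5 : (∫⁻ x in ball a (5 * t), W x ^ (-(1 / (p - 1)))) ^ (p - 1) ≤
        (m (5 * t))⁻¹ * (K * volume (ball a (5 * t)) ^ p) :=
      (ENNReal.mul_le_iff_le_inv (hm0 _ (by linarith)) (hmt _)).1 (hApW a (5 * t) (by linarith))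
    have h6 : ∫⁻ x in ball a (5 * t), F x ≤
        K ^ (1 / p) * volume (ball a (5 * t)) * (m (5 * t) ^ (-(1 / p)) * N (5 * t)) := by
      rw [← ENNReal.rpow_le_rpow_iff hp0]
      refine (hH.trans (mul_le_mul' le_rfl h5)).trans (le_of_eq ?_)
      rw [ENNReal.mul_rpow_of_nonneg _ _ hp0.le, ENNReal.mul_rpow_of_nonneg _ _ hp0.le,
        ENNReal.mul_rpow_of_nonneg _ _ hp0.le, ← ENNReal.rpow_mul, ← ENNReal.rpow_mul,
        one_div_mul_cancel hp0.ne', neg_mul, one_div_mul_cancel hp0.ne', ENNReal.rpow_one,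
        ENNReal.rpow_neg_one]
      ring
    have hv0 : volume (ball x t) ≠ 0 := (measure_ball_pos volume x ht0).ne'
    have hvt : volume (ball x t) ≠ ⊤ := measure_ball_lt_top.ne
    calc (volume (ball x t))⁻¹ * ∫⁻ y in ball x t, F y
        ≤ (volume (ball x t))⁻¹ * (K ^ (1 / p) * volume (ball a (5 * t)) *
          (m (5 * t) ^ (-(1 / p)) * N (5 * t))) :=
          mul_le_mul' le_rfl ((lintegral_mono_set hsub).trans h6)
      _ = ((volume (ball x t))⁻¹ * volume (ball x t)) * (K ^ (1 / p) * ENNReal.ofReal (5 ^ n)) *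
          (m (5 * t) ^ (-(1 / p)) * N (5 * t)) := by rw [hvol]; ring
      _ = (K ^ (1 / p) * ENNReal.ofReal (5 ^ n)) * (m (5 * t) ^ (-(1 / p)) * N (5 * t)) := by
          rw [ENNReal.inv_mul_cancel hv0 hvt, one_mul]
      _ ≤ (K ^ (1 / p) * ENNReal.ofReal (5 ^ n)) * (C1 * I) :=
          mul_le_mul' le_rfl (htail _ (by linarith))
      _ = Kc * I := by rw [hKcdef]; ring
  -- local part
  set F1 := (ball a (5 * r)).indicator F with hF1
  have hF1m : Measurable F1 := hFm.indicator measurableSet_ball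
  have hpt : ∀ x ∈ ball a r, HLMax f x ^ p ≤
      (⨆ t : Set.Ioi (0 : ℝ), (volume (ball x t.1))⁻¹ * ∫⁻ y in ball x t.1, F1 y) ^ p +
        (Kc * I) ^ p := by
    intro x hx
    have hmax : HLMax f x ≤ max
        (⨆ t : Set.Ioi (0 : ℝ), (volume (ball x t.1))⁻¹ * ∫⁻ y in ball x t.1, F1 y) (Kc * I) := by
      refine iSup_le fun t => ?_
      rcases lt_or_ge r t.1 with ht | ht
      · exact le_max_of_le_right (hbig x hx t.1 ht)
      · refine le_max_of_le_left (le_iSup_of_le t (le_of_eq ?_))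
        congr 1
        refine setLIntegral_congr_fun measurableSet_ball fun y hy => ?_
        have : y ∈ ball a (5 * r) := by
          refine ball_subset_ball' ?_ hy
          have := mem_ball.1 hx
          linarith
        rw [hF1, indicator_of_mem this]
    refine (ENNReal.rpow_le_rpow hmax hp0.le).trans ?_
    rcases max_choice (⨆ t : Set.Ioi (0 : ℝ), (volume (ball x t.1))⁻¹ * ∫⁻ y in ball x t.1, F1 y)
      (Kc * I) with h | h <;> rw [h]
    · exact le_self_add
    · exact le_add_self
  have hF1int : ∫⁻ x, F1 x ^ p * W x = N (5 * r) ^ p := by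
    rw [hNp, ← lintegral_indicator measurableSet_ball]
    refine lintegral_congr fun x => ?_
    by_cases hx : x ∈ ball a (5 * r)
    · simp [hF1, hx]
    · simp [hF1, hx, hp0]
  have hN5 : N (5 * r) ^ p ≤ C1 ^ p * D * m r * I ^ p := by
    have h1 := ENNReal.rpow_le_rpow (htail (5 * r) (by linarith)) hp0.le
    rw [ENNReal.mul_rpow_of_nonneg _ _ hp0.le, ENNReal.mul_rpow_of_nonneg _ _ hp0.le,
      ← ENNReal.rpow_mul, neg_mul, one_div_mul_cancel hp0.ne', ENNReal.rpow_neg_one] at h1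
    have h50 := hm0 (5 * r) (by linarith)
    calc N (5 * r) ^ p = m (5 * r) * ((m (5 * r))⁻¹ * N (5 * r) ^ p) := by
          rw [← mul_assoc, ENNReal.mul_inv_cancel h50 (hmt _), one_mul]
      _ ≤ (D * m r) * (C1 ^ p * I ^ p) := mul_le_mul' (hmD r hr) h1
      _ = _ := by ring
  have hmain : ∫⁻ x in ball a r, HLMax f x ^ p * W x ≤
      (CM * (C1 ^ p * D) + Kc ^ p) * m r * I ^ p := by
    calc ∫⁻ x in ball a r, HLMax f x ^ p * W x
        ≤ ∫⁻ x in ball a r, ((⨆ t : Set.Ioi (0 : ℝ), (volume (ball x t.1))⁻¹ *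
            ∫⁻ y in ball x t.1, F1 y) ^ p * W x + (Kc * I) ^ p * W x) := by
          refine setLIntegral_mono' measurableSet_ball fun x hx => ?_
          rw [← add_mul]
          exact mul_le_mul' (hpt x hx) le_rfl
      _ = (∫⁻ x in ball a r, (⨆ t : Set.Ioi (0 : ℝ), (volume (ball x t.1))⁻¹ *
            ∫⁻ y in ball x t.1, F1 y) ^ p * W x) + (Kc * I) ^ p * m r := by
          rw [lintegral_add_right _ (hWm.const_mul _), lintegral_const_mul _ hWm]
          rfl
      _ ≤ CM * N (5 * r) ^ p + (Kc * I) ^ p * m r := by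
          refine add_le_add ?_ le_rfl
          rw [← hF1int]
          exact (setLIntegral_le_lintegral _ _).trans (hMuck F1 hF1m)
      _ ≤ CM * (C1 ^ p * D * m r * I ^ p) + (Kc * I) ^ p * m r :=
          add_le_add (mul_le_mul' le_rfl hN5) le_rfl
      _ = _ := by
          rw [ENNReal.mul_rpow_of_nonneg Kc I hp0.le]; ring
  have hfin : wLpE p w (HLMax f) (ball a r) ≤ CC * m r ^ (1 / p) * I := by
    refine (ENNReal.rpow_le_rpow hmain hip).trans (le_of_eq ?_)
    rw [ENNReal.mul_rpow_of_nonneg _ _ hip, ENNReal.mul_rpow_of_nonneg _ _ hip,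
      ← ENNReal.rpow_mul, mul_one_div_cancel hp0.ne', ENNReal.rpow_one]
  refine hfin.trans ?_
  gcongr
  rw [ENNReal.le_ofReal_iff_toReal_le hCC (by positivity)]
  linarith
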